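/- Let (P_n), P be Borel probability measures on ℝ^d and A ⊂ 𝕊^{d-1} a Borel set with σ(A) > 0. If π_u(P_n) ⇒ π_u(P) for every u ∈ A, and for every u ∈ A the projection π_u(P) has finite moments of all orders and satisfies Carleman's condition, then P_n ⇒ P. -/

import Mathlib

open MeasureTheory Filter
open scoped InnerProductSpace ENNReal Topology BigOperators

/-- Weak convergence of a sequence of measures: convergence of integrals of all
bounded continuous functions. -/
def WeakTendsto {E : Type*} [MeasurableSpace E] [TopologicalSpace E]
    (μ : ℕ → Measure E) (ν : Measure E) : Prop :=
  ∀ f : BoundedContinuousFunction E ℝ,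
    Tendsto (fun n => ∫ x, f x ∂(μ n)) atTop (𝓝 (∫ x, f x ∂ν))

/-- Carleman's condition for a measure on ℝ: the series of reciprocal (2m)-th
roots of the even absolute moments diverges. -/
def Carleman (ν : Measure ℝ) : Prop :=
  ¬ Summable (fun m : ℕ =>
    (∫ t, |t| ^ (2 * (m + 1)) ∂ν) ^ (-(1 / (2 * (m + 1) : ℝ))))

/-!
Weak convergence of the projections in spanning directions makes the sequence tight, so by
Prokhorov's theorem it suffices that every cluster point `Q` equals `P`, where `Q` and `P` have the
same projections in the directions of `A`. The moments `∫ ⟪u, x⟫ ^ m` are homogeneous polynomials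
in `u`, and a nonzero homogeneous polynomial cannot vanish on a subset of the sphere of positive
surface measure. By duality the powers of the linear forms `⟪u, ·⟫`, `u ∈ A`, span all polynomials,
whence `P` and `Q` integrate every polynomial equally. Finally, along each direction `v` in which
Carleman's condition holds, the Denjoy–Carleman theorem (Bang's proof) applies to
`t ↦ ∫ p(x) exp (i ⟪w + t v, x⟫) d(P - Q)(x)`: if this vanishes at `t = 0` for every polynomial `p`,
then so do all derivatives there, and it vanishes for all `t`. As such directions span, moving away
from `w = 0` along one of them at a time shows that `P` and `Q` have the same characteristic
function.
-/

section DenjoyCarleman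

variable {E : Type*} [NormedAddCommGroup E] {M : ℕ → ℝ} {F : ℕ → ℝ → E}

/-- The Bang degree of `F` at `x`, relative to the weights `M`, is at least `N`. Here `F n` plays
the role of the `n`-th derivative of `F 0`. A zero of infinite order has infinite Bang degree, and
the degree drops by at most one along an interval of length `M N / M (N + 1) / e`. -/
def BangDegreeGE (M : ℕ → ℝ) (F : ℕ → ℝ → E) (N : ℕ) (x : ℝ) : Prop :=
  ∀ n : ℕ, ‖F n x‖ ≤ Real.exp (n - N) * M n

/-- The first `j` steps along which the Bang degree can drop from `N + j` to `N`. -/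
noncomputable def bangLength (M : ℕ → ℝ) (N j : ℕ) : ℝ :=
  ∑ k ∈ Finset.range j, M (N + k) / M (N + k + 1) / Real.exp 1

lemma bangDegreeGE_of_eq_zero (hM : ∀ n, 0 < M n) {x : ℝ} (h0 : ∀ n, F n x = 0) (N : ℕ) :
    BangDegreeGE M F N x := fun n => by
  rw [h0, norm_zero]
  exact mul_nonneg (Real.exp_nonneg _) (hM n).le

variable [NormedSpace ℝ E]

lemma BangDegreeGE.norm_le_mul_exp (hM : ∀ n, 0 < M n)
    (hmono : Monotone fun n => M (n + 1) / M n)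
    (hF : ∀ n t, HasDerivAt (F n) (F (n + 1) t) t) (hb : ∀ n t, ‖F n t‖ ≤ M n) {N : ℕ} {x : ℝ}
    (hx : BangDegreeGE M F (N + 1) x) {n : ℕ} (hn : n ≤ N + 1) {s : ℝ} (hs : x ≤ s) :
    ‖F n s‖ ≤ Real.exp (n - (N + 1 : ℕ)) * M n *
      Real.exp (Real.exp 1 * (M (N + 1) / M N) * (s - x)) := by
  set c : ℝ := Real.exp 1 * (M (N + 1) / M N) with hc
  have hc0 : 0 ≤ c := mul_nonneg (Real.exp_nonneg _) (div_pos (hM _) (hM _)).le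
  induction hn using Nat.decreasingInduction generalizing s with
  | self =>
    rw [sub_self, Real.exp_zero, one_mul]
    exact (hb _ s).trans (le_mul_of_one_le_right (hM _).le
      (Real.one_le_exp (mul_nonneg hc0 (sub_nonneg.2 hs))))
  | of_succ n hn ih =>
    have hratio : M (n + 1) ≤ M (N + 1) / M N * M n :=
      (div_le_iff₀ (hM n)).1 (hmono (Nat.lt_succ_iff.1 hn))
    have hexp : Real.exp ((n + 1 : ℕ) - (N + 1 : ℕ)) =
        Real.exp 1 * Real.exp (n - (N + 1 : ℕ)) := by
      rw [← Real.exp_add]; congr 1; push_cast; ring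
    have hderiv (r : ℝ) : HasDerivAt
        (fun r => Real.exp (n - (N + 1 : ℕ)) * M n * Real.exp (c * (r - x)))
        (Real.exp (n - (N + 1 : ℕ)) * M n * (Real.exp (c * (r - x)) * c)) r := by
      have hlin : HasDerivAt (fun r => c * (r - x)) c r := by
        simpa using ((hasDerivAt_id r).sub_const x).const_mul c
      exact hlin.exp.const_mul _
    refine image_norm_le_of_norm_deriv_right_le_deriv_boundary
      (fun r _ => (hF n r).continuousAt.continuousWithinAt)
      (fun r _ => (hF n r).hasDerivWithinAt) (by simpa using hx n) hderiv
      (fun r hr => ?_) ⟨hs, le_rfl⟩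
    calc ‖F (n + 1) r‖
        ≤ Real.exp ((n + 1 : ℕ) - (N + 1 : ℕ)) * M (n + 1) * Real.exp (c * (r - x)) := ih hr.1
      _ ≤ Real.exp 1 * Real.exp (n - (N + 1 : ℕ)) * (M (N + 1) / M N * M n) *
            Real.exp (c * (r - x)) := by rw [hexp]; gcongr
      _ = Real.exp (n - (N + 1 : ℕ)) * M n * (Real.exp (c * (r - x)) * c) := by rw [hc]; ring

lemma BangDegreeGE.of_succ (hM : ∀ n, 0 < M n) (hmono : Monotone fun n => M (n + 1) / M n)
    (hF : ∀ n t, HasDerivAt (F n) (F (n + 1) t) t) (hb : ∀ n t, ‖F n t‖ ≤ M n) {N : ℕ} {x t : ℝ}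
    (hx : BangDegreeGE M F (N + 1) x) (hxt : x ≤ t)
    (ht : t ≤ x + M N / M (N + 1) / Real.exp 1) : BangDegreeGE M F N t := fun n => by
  rcases lt_or_ge N n with hn | hn
  · have hone : 1 ≤ Real.exp ((n : ℝ) - N) :=
      Real.one_le_exp (sub_nonneg.2 (Nat.cast_le.2 hn.le))
    exact (hb n t).trans (le_mul_of_one_le_left (hM n).le hone)
  · have hexponent : Real.exp 1 * (M (N + 1) / M N) * (t - x) ≤ 1 := by
      have := hM N
      have := hM (N + 1)
      calc Real.exp 1 * (M (N + 1) / M N) * (t - x)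
          ≤ Real.exp 1 * (M (N + 1) / M N) * (M N / M (N + 1) / Real.exp 1) := by
            gcongr; linarith
        _ = 1 := by field_simp
    calc ‖F n t‖
        ≤ Real.exp (n - (N + 1 : ℕ)) * M n *
            Real.exp (Real.exp 1 * (M (N + 1) / M N) * (t - x)) :=
          hx.norm_le_mul_exp hM hmono hF hb (hn.trans N.le_succ) hxt
      _ ≤ Real.exp (n - (N + 1 : ℕ)) * M n * Real.exp 1 := by
          have := (hM n).le
          gcongr
      _ = Real.exp (n - N) * M n := by
          rw [mul_right_comm, ← Real.exp_add]; congr 2; push_cast; ring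

lemma BangDegreeGE.of_add (hM : ∀ n, 0 < M n) (hmono : Monotone fun n => M (n + 1) / M n)
    (hF : ∀ n t, HasDerivAt (F n) (F (n + 1) t) t) (hb : ∀ n t, ‖F n t‖ ≤ M n) {N j : ℕ}
    {x t : ℝ} (hx : BangDegreeGE M F (N + j) x) (hxt : x ≤ t) (ht : t ≤ x + bangLength M N j) :
    BangDegreeGE M F N t := by
  induction j generalizing x with
  | zero =>
    obtain rfl : t = x := le_antisymm (by simpa [bangLength] using ht) hxt
    exact hx
  | succ j ih =>
    set δ := M (N + j) / M (N + j + 1) / Real.exp 1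
    have hδ : 0 ≤ δ := (div_pos (div_pos (hM _) (hM _)) (Real.exp_pos _)).le
    have hlen : bangLength M N (j + 1) = bangLength M N j + δ := Finset.sum_range_succ _ _
    have hpos : 0 ≤ bangLength M N j :=
      Finset.sum_nonneg fun k _ => (div_pos (div_pos (hM _) (hM _)) (Real.exp_pos _)).le
    have hmin : BangDegreeGE M F (N + j) (min t (x + δ)) :=
      hx.of_succ hM hmono hF hb (le_min hxt (by linarith)) (min_le_right _ _)
    refine ih hmin (min_le_left _ _) ?_
    rw [← min_add_add_right]
    exact le_min (by linarith) (by linarith)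

lemma exists_le_bangLength (hM : ∀ n, 0 < M n) (hdiv : ¬ Summable fun n => M n / M (n + 1))
    (N : ℕ) (t : ℝ) : ∃ j, t ≤ bangLength M N j := by
  have hdiv' : ¬ Summable fun k => M (N + k) / M (N + k + 1) / Real.exp 1 := fun hs => by
    rw [summable_div_const_iff (Real.exp_ne_zero 1)] at hs
    refine hdiv ((summable_nat_add_iff N).1 (hs.congr fun k => ?_))
    rw [add_comm N k]
  have hnonneg (k : ℕ) : 0 ≤ M (N + k) / M (N + k + 1) / Real.exp 1 :=
    (div_pos (div_pos (hM _) (hM _)) (Real.exp_pos _)).le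
  exact (((not_summable_iff_tendsto_nat_atTop_of_nonneg hnonneg).1 hdiv').eventually_ge_atTop
    t).exists

lemma eq_zero_of_nonneg_of_not_summable (hM : ∀ n, 0 < M n)
    (hmono : Monotone fun n => M (n + 1) / M n) (hdiv : ¬ Summable fun n => M n / M (n + 1))
    (hF : ∀ n t, HasDerivAt (F n) (F (n + 1) t) t) (hb : ∀ n t, ‖F n t‖ ≤ M n)
    (h0 : ∀ n, F n 0 = 0) {t : ℝ} (ht : 0 ≤ t) : F 0 t = 0 := by
  have hbound (N : ℕ) : ‖F 0 t‖ ≤ Real.exp (-(N : ℝ)) * M 0 := by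
    obtain ⟨j, hj⟩ := exists_le_bangLength hM hdiv N t
    simpa using (bangDegreeGE_of_eq_zero hM h0 (N + j)).of_add hM hmono hF hb ht
      (by simpa using hj) 0
  have hlim : Tendsto (fun N : ℕ => Real.exp (-(N : ℝ)) * M 0) atTop (𝓝 0) := by
    simpa using (Real.tendsto_exp_neg_atTop_nhds_zero.comp
      tendsto_natCast_atTop_atTop).mul_const (M 0)
  exact norm_le_zero_iff.1 (ge_of_tendsto' hlim hbound)

theorem denjoy_carleman (hM : ∀ n, 0 < M n) (hmono : Monotone fun n => M (n + 1) / M n)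
    (hdiv : ¬ Summable fun n => M n / M (n + 1)) {C : ℝ}
    (hF : ∀ n t, HasDerivAt (F n) (F (n + 1) t) t) (hb : ∀ n t, ‖F n t‖ ≤ C * M n)
    (h0 : ∀ n, F n 0 = 0) (t : ℝ) : F 0 t = 0 := by
  wlog hC : 0 < C generalizing C
  · exact this (fun n t => (hb n t).trans (by have := hM n; gcongr; linarith)) one_pos
  have hratio (a b : ℝ) : C * a / (C * b) = a / b := mul_div_mul_left a b hC.ne'
  have hCM (n : ℕ) : 0 < C * M n := mul_pos hC (hM n)
  rcases le_total 0 t with ht | ht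
  · exact eq_zero_of_nonneg_of_not_summable hCM (by simpa only [hratio] using hmono)
      (by simpa only [hratio] using hdiv) hF hb h0 ht
  · have hreflect (n : ℕ) (s : ℝ) : HasDerivAt (fun s => (-1 : ℝ) ^ n • F n (-s))
        ((-1 : ℝ) ^ (n + 1) • F (n + 1) (-s)) s := by
      refine (((hF n (-s)).scomp s (hasDerivAt_neg s)).const_smul ((-1 : ℝ) ^ n)).congr_deriv ?_
      rw [smul_smul, pow_succ]
    simpa using eq_zero_of_nonneg_of_not_summable (F := fun n s => (-1 : ℝ) ^ n • F n (-s)) hCM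
      (by simpa only [hratio] using hmono) (by simpa only [hratio] using hdiv) hreflect
      (fun n s => by simpa [norm_smul] using hb n (-s)) (fun n => by simp [h0])
      (neg_nonneg.2 ht)

end DenjoyCarleman

section CarlemanInequality

variable {a : ℕ → ℝ}

lemma sum_weighted_average_add_le (ha : ∀ n, 0 ≤ a n) (N : ℕ) :
    ∑ n ∈ Finset.range N, (∑ k ∈ Finset.range (n + 1), (k + 1) * a k) / ((n : ℝ) + 1) ^ 2
      + 2 * (∑ k ∈ Finset.range N, (k + 1) * a k) / (N + 1) ≤ 2 * ∑ k ∈ Finset.range N, a k := by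
  induction N with
  | zero => simp
  | succ N ih =>
    rw [Finset.sum_range_succ, Finset.sum_range_succ a]
    set S := ∑ k ∈ Finset.range (N + 1), ((k : ℝ) + 1) * a k with hS
    have hS0 : 0 ≤ S := Finset.sum_nonneg fun k _ => mul_nonneg (by positivity) (ha k)
    -- `1 / (N + 1) ^ 2 + 2 / (N + 2) ≤ 2 / (N + 1)` makes the left-hand side telescope.
    have htelescope : S / ((N : ℝ) + 1) ^ 2 + 2 * S / ((N + 1 : ℕ) + 1) ≤ 2 * S / (N + 1) := by
      have hdiff : 2 * S / (N + 1) - (S / ((N : ℝ) + 1) ^ 2 + 2 * S / ((N + 1 : ℕ) + 1)) =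
          S * N / ((N + 1) ^ 2 * (N + 2)) := by
        push_cast; field_simp; ring
      have : 0 ≤ S * N / (((N : ℝ) + 1) ^ 2 * (N + 2)) := by positivity
      linarith
    have hlast : 2 * S / ((N : ℝ) + 1) =
        2 * (∑ k ∈ Finset.range N, (k + 1) * a k) / (N + 1) + 2 * a N := by
      rw [hS, Finset.sum_range_succ]; field_simp
    linarith

lemma summable_weighted_average (ha : ∀ n, 0 ≤ a n) (hs : Summable a) :
    Summable fun n : ℕ => (∑ k ∈ Finset.range (n + 1), (k + 1) * a k) / ((n : ℝ) + 1) ^ 2 := by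
  have hsum (n : ℕ) : 0 ≤ ∑ k ∈ Finset.range n, ((k : ℝ) + 1) * a k :=
    Finset.sum_nonneg fun k _ => mul_nonneg (by positivity) (ha k)
  refine summable_of_sum_range_le (c := 2 * ∑' k, a k)
    (fun n => div_nonneg (hsum _) (by positivity)) fun N => ?_
  have hrest : 0 ≤ 2 * (∑ k ∈ Finset.range N, (k + 1) * a k) / ((N : ℝ) + 1) :=
    div_nonneg (mul_nonneg zero_le_two (hsum N)) (by positivity)
  linarith [sum_weighted_average_add_le ha N, hs.sum_le_tsum (Finset.range N) fun k _ => ha k]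

lemma div_exp_one_le_factorial_rpow_inv {n : ℕ} (hn : n ≠ 0) :
    n / Real.exp 1 ≤ (n.factorial : ℝ) ^ (n : ℝ)⁻¹ := by
  rw [Real.le_rpow_inv_iff_of_pos (by positivity) (by positivity) (by positivity),
    Real.rpow_natCast, div_pow, ← Real.exp_nat_mul, mul_one, div_le_iff₀' (Real.exp_pos _),
    ← div_le_iff₀ (by positivity)]
  exact Real.pow_div_factorial_le_exp n n.cast_nonneg n

-- AM-GM for the sequence `(k + 1) * a k`, whose partial products carry the factor `(n + 1)!`.
lemma prod_rpow_inv_le_weighted_average (ha : ∀ n, 0 ≤ a n) (n : ℕ) :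
    (∏ k ∈ Finset.range (n + 1), a k) ^ (1 / ((n : ℝ) + 1)) ≤
      Real.exp 1 * ((∑ k ∈ Finset.range (n + 1), (k + 1) * a k) / ((n : ℝ) + 1) ^ 2) := by
  have hprod : 0 ≤ ∏ k ∈ Finset.range (n + 1), a k := Finset.prod_nonneg fun k _ => ha k
  set G := (∏ k ∈ Finset.range (n + 1), a k) ^ ((n : ℝ) + 1)⁻¹ with hG
  have hfactor : ∏ k ∈ Finset.range (n + 1), ((k : ℝ) + 1) * a k =
      (n + 1).factorial * ∏ k ∈ Finset.range (n + 1), a k := by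
    rw [Finset.prod_mul_distrib, ← Finset.prod_range_add_one_eq_factorial]
    push_cast; rfl
  have hamgm : ((n + 1).factorial : ℝ) ^ ((n : ℝ) + 1)⁻¹ * G ≤
      (∑ k ∈ Finset.range (n + 1), (k + 1) * a k) / ((n : ℝ) + 1) := by
    have := Real.geom_mean_le_arith_mean (Finset.range (n + 1)) (fun _ => (1 : ℝ))
      (fun k => (k + 1) * a k) (fun _ _ => zero_le_one)
      (Finset.sum_pos (fun _ _ => one_pos) Finset.nonempty_range_add_one)
      (fun k _ => mul_nonneg (by positivity) (ha k))
    simpa [hfactor, Real.mul_rpow (Nat.cast_nonneg _) hprod] using this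
  have hstirling : ((n : ℝ) + 1) / Real.exp 1 ≤ ((n + 1).factorial : ℝ) ^ ((n : ℝ) + 1)⁻¹ := by
    simpa using div_exp_one_le_factorial_rpow_inv n.succ_ne_zero
  rw [one_div, ← hG]
  calc G = Real.exp 1 / (n + 1) * ((n + 1) / Real.exp 1 * G) := by field_simp
    _ ≤ Real.exp 1 / (n + 1) * (((n + 1).factorial : ℝ) ^ ((n : ℝ) + 1)⁻¹ * G) := by
      have : 0 ≤ G := Real.rpow_nonneg hprod _
      gcongr
    _ ≤ Real.exp 1 / (n + 1) *
          ((∑ k ∈ Finset.range (n + 1), (k + 1) * a k) / ((n : ℝ) + 1)) := by gcongr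
    _ = _ := by field_simp

theorem summable_geom_mean (ha : ∀ n, 0 ≤ a n) (hs : Summable a) :
    Summable fun n : ℕ => (∏ k ∈ Finset.range (n + 1), a k) ^ (1 / ((n : ℝ) + 1)) :=
  ((summable_weighted_average ha hs).mul_left (Real.exp 1)).of_nonneg_of_le
    (fun _ => Real.rpow_nonneg (Finset.prod_nonneg fun k _ => ha k) _)
    (prod_rpow_inv_le_weighted_average ha)

end CarlemanInequality

section CarlemanWeights

/-- The `L²(ν)` norm of `t ↦ t ^ n`. Under Carleman's condition these numbers serve as weights in
the Denjoy–Carleman theorem. -/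
noncomputable def momentNorm (ν : Measure ℝ) (n : ℕ) : ℝ :=
  √(∫ t, |t| ^ (2 * n) ∂ν)

variable {ν : Measure ℝ}

lemma integral_even_moment_pos [NeZero ν] (hi : ∀ m : ℕ, Integrable (fun t => |t| ^ m) ν)
    (hC : Carleman ν) (n : ℕ) : 0 < ∫ t, |t| ^ (2 * n) ∂ν := by
  have hnonneg (m : ℕ) : 0 ≤ fun t : ℝ => |t| ^ m := fun t => pow_nonneg (abs_nonneg t) m
  refine (integral_nonneg (hnonneg _)).lt_of_ne' fun hzero => hC ?_
  have hae : ∀ᵐ t ∂ν, t = 0 := by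
    filter_upwards [(integral_eq_zero_iff_of_nonneg (hnonneg _) (hi _)).1 hzero] with t ht
    exact abs_eq_zero.1 (eq_zero_of_pow_eq_zero ht)
  have hmoment (k : ℕ) : ∫ t, |t| ^ (2 * (k + 1)) ∂ν = 0 := integral_eq_zero_of_ae <| by
    filter_upwards [hae] with t ht
    simp [ht]
  -- Since `0 ^ (-x) = 0`, the Dirac mass at `0` does not satisfy `Carleman`.
  refine summable_zero.congr fun k => ?_
  rw [hmoment, Real.zero_rpow (neg_ne_zero.2 (by positivity))]

lemma momentNorm_pos [NeZero ν] (hi : ∀ m : ℕ, Integrable (fun t => |t| ^ m) ν)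
    (hC : Carleman ν) (n : ℕ) : 0 < momentNorm ν n :=
  Real.sqrt_pos.2 (integral_even_moment_pos hi hC n)

lemma momentNorm_succ_sq_le (hi : ∀ m : ℕ, Integrable (fun t => |t| ^ m) ν) (n : ℕ) :
    momentNorm ν (n + 1) ^ 2 ≤ momentNorm ν n * momentNorm ν (n + 2) := by
  have hnonneg (m : ℕ) : 0 ≤ᵐ[ν] fun t : ℝ => |t| ^ m := .of_forall fun t => by positivity
  have hL2 (m : ℕ) : MemLp (fun t : ℝ => |t| ^ m) (ENNReal.ofReal 2) ν := by
    rw [ENNReal.ofReal_ofNat, memLp_two_iff_integrable_sq (by fun_prop)]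
    simpa only [← pow_mul] using hi (m * 2)
  have hpow (m : ℕ) (t : ℝ) : (|t| ^ m) ^ (2 : ℝ) = |t| ^ (2 * m) := by
    rw [Real.rpow_ofNat, ← pow_mul, mul_comm]
  calc momentNorm ν (n + 1) ^ 2 = ∫ t, |t| ^ n * |t| ^ (n + 2) ∂ν := by
        rw [momentNorm, Real.sq_sqrt (integral_nonneg fun t => by positivity)]
        simp only [← pow_add]
        congr! 3
        ring
    _ ≤ _ := integral_mul_le_Lp_mul_Lq_of_nonneg Real.HolderConjugate.two_two (hnonneg n)
        (hnonneg (n + 2)) (hL2 n) (hL2 (n + 2))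
    _ = momentNorm ν n * momentNorm ν (n + 2) := by
        simp only [hpow, momentNorm, Real.sqrt_eq_rpow]

lemma monotone_momentNorm_ratio [NeZero ν] (hi : ∀ m : ℕ, Integrable (fun t => |t| ^ m) ν)
    (hC : Carleman ν) : Monotone fun n => momentNorm ν (n + 1) / momentNorm ν n := by
  have hpos := momentNorm_pos hi hC
  refine monotone_nat_of_le_succ fun n => ?_
  rw [div_le_div_iff₀ (hpos _) (hpos _), ← sq, mul_comm]
  exact momentNorm_succ_sq_le hi n

lemma prod_range_div_succ {M : ℕ → ℝ} (hM : ∀ n, M n ≠ 0) (N : ℕ) :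
    ∏ k ∈ Finset.range N, M k / M (k + 1) = M 0 / M N := by
  induction N with
  | zero => rw [Finset.prod_range_zero, div_self (hM 0)]
  | succ N ih => rw [Finset.prod_range_succ, ih, div_mul_div_cancel₀ (hM N)]

-- The geometric means of the ratios are the terms of Carleman's series.
lemma not_summable_momentNorm_ratio [IsProbabilityMeasure ν]
    (hi : ∀ m : ℕ, Integrable (fun t => |t| ^ m) ν) (hC : Carleman ν) :
    ¬ Summable fun n => momentNorm ν n / momentNorm ν (n + 1) := fun hs => hC <| by
  have hpos := momentNorm_pos hi hC
  refine (summable_geom_mean (fun n => (div_pos (hpos n) (hpos _)).le) hs).congr fun n => ?_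
  have hzero : momentNorm ν 0 = 1 := by simp [momentNorm]
  have hmoment := (integral_even_moment_pos hi hC (n + 1)).le
  rw [prod_range_div_succ fun k => (hpos k).ne', hzero, one_div, momentNorm, Real.sqrt_eq_rpow,
    ← Real.rpow_neg hmoment, ← Real.rpow_mul hmoment]
  congr 1
  field_simp

end CarlemanWeights

section PolynomialZeroSets

theorem ae_eval_ne_zero {n : ℕ} (μ : Fin n → Measure ℝ) [∀ i, SigmaFinite (μ i)]
    [∀ i, NullSingletonClass (μ i)] {p : MvPolynomial (Fin n) ℝ} (hp : p ≠ 0) :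
    ∀ᵐ y ∂Measure.pi μ, MvPolynomial.eval y p ≠ 0 := by
  induction n with
  | zero =>
    refine .of_forall fun y hy => hp ?_
    rw [MvPolynomial.eq_C_of_isEmpty p] at hy ⊢
    simpa using hy
  | succ n ih =>
    set f := MvPolynomial.finSuccEquiv ℝ n p with hf
    have hlead : f.leadingCoeff ≠ 0 := by simpa [hf] using hp
    have hslice {y : Fin n → ℝ} (hy : MvPolynomial.eval y f.leadingCoeff ≠ 0) :
        ∀ᵐ a ∂μ 0, (f.map (MvPolynomial.eval y)).eval a ≠ 0 := by
      have hne : f.map (MvPolynomial.eval y) ≠ 0 := fun h => hy <| by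
        simpa [Polynomial.coeff_map] using congrArg (Polynomial.coeff · f.natDegree) h
      exact (Polynomial.finite_setOfPred_isRoot hne).countable.ae_notMem _
    have hmeas : MeasurableSet
        {z : ℝ × (Fin n → ℝ) | MvPolynomial.eval (Fin.cons z.1 z.2 : Fin (n + 1) → ℝ) p ≠ 0} := by
      have hcons : Continuous fun z : ℝ × (Fin n → ℝ) => (Fin.cons z.1 z.2 : Fin (n + 1) → ℝ) := by
        fun_prop
      exact (isOpen_ne_fun ((MvPolynomial.continuous_eval p).comp hcons)
        continuous_const).measurableSet
    have hprod : ∀ᵐ z ∂(μ 0).prod (Measure.pi fun i : Fin n => μ i.succ),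
        MvPolynomial.eval (Fin.cons z.1 z.2 : Fin (n + 1) → ℝ) p ≠ 0 := by
      refine (Measure.ae_prod_mem_iff_ae_ae_mem hmeas).2 ((Measure.ae_ae_comm hmeas).2 ?_)
      filter_upwards [ih (fun i => μ i.succ) hlead] with y hy
      filter_upwards [hslice hy] with a ha
      exact (MvPolynomial.eval_eq_eval_mv_eval' y a p).trans_ne ha
    filter_upwards [(measurePreserving_piFinSuccAbove μ 0).quasiMeasurePreserving.ae hprod]
      with y hy
    rwa [← Fin.cons_self_tail y]

end PolynomialZeroSets

section Dehomogenization

open MvPolynomial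

lemma eval_smul_of_isHomogeneous {R σ : Type*} [CommSemiring R] {p : MvPolynomial σ R} {m : ℕ}
    (hp : p.IsHomogeneous m) (c : R) (u : σ → R) : eval (c • u) p = c ^ m * eval u p := by
  simp only [eval_eq, Finset.mul_sum]
  refine Finset.sum_congr rfl fun k hk => ?_
  simp only [Pi.smul_apply, smul_eq_mul, mul_pow, Finset.prod_mul_distrib,
    Finset.prod_pow_eq_pow_sum, ← hp.degree_eq_sum_deg_support hk]
  ring

variable {R : Type*} [CommSemiring R] {n : ℕ}

/-- The polynomial in one variable less obtained by setting the `i`-th variable to `1`, used to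
pass from homogeneous polynomials to polynomials on an affine chart of projective space. -/
noncomputable def dehomogenize (i : Fin (n + 1)) (p : MvPolynomial (Fin (n + 1)) R) :
    MvPolynomial (Fin n) R :=
  aeval (i.insertNth (α := fun _ => MvPolynomial (Fin n) R) 1 X) p

lemma eval_dehomogenize (i : Fin (n + 1)) (p : MvPolynomial (Fin (n + 1)) R) (y : Fin n → R) :
    eval y (dehomogenize i p) = eval (i.insertNth (α := fun _ => R) 1 y) p := by
  rw [dehomogenize, ← aeval_eq_eval, ← AlgHom.comp_apply, comp_aeval, ← aeval_eq_eval]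
  congr 2
  ext j
  cases j using Fin.succAboveCases i <;> simp

lemma smul_insertNth_one_div {K : Type*} [Field K] {u : Fin (n + 1) → K} {i : Fin (n + 1)}
    (hi : u i ≠ 0) :
    u i • i.insertNth (α := fun _ => K) 1 (fun j => u (i.succAbove j) / u i) = u := by
  ext j
  cases j using Fin.succAboveCases i <;> simp [mul_div_cancel₀ _ hi]

lemma dehomogenize_ne_zero {K : Type*} [Field K] [Infinite K] {m : ℕ}
    {p : MvPolynomial (Fin (n + 1)) K} (hp : p.IsHomogeneous m) (hne : p ≠ 0) (i : Fin (n + 1)) :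
    dehomogenize i p ≠ 0 := fun hzero => by
  refine mul_ne_zero (X_ne_zero i) hne (MvPolynomial.funext fun u => ?_)
  rw [map_mul, eval_X, map_zero, mul_eq_zero]
  refine or_iff_not_imp_left.2 fun hi => ?_
  rw [← smul_insertNth_one_div hi, eval_smul_of_isHomogeneous hp, ← eval_dehomogenize, hzero,
    map_zero, mul_zero]

end Dehomogenization

section Sphere

open NormedSpace

lemma norm_mul_norm_normalize_sub_le {E : Type*} [NormedAddCommGroup E] [NormedSpace ℝ E]
    (x y : E) : ‖x‖ * ‖normalize x - normalize y‖ ≤ 2 * ‖x - y‖ := by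
  have hnorm : ‖normalize y‖ ≤ 1 := by
    rcases eq_or_ne y 0 with rfl | hy
    · simp
    · exact (norm_normalize_eq_one_iff.2 hy).le
  have hsplit : ‖x‖ • (normalize x - normalize y) = (x - y) + (‖y‖ - ‖x‖) • normalize y := by
    rw [smul_sub, sub_smul, norm_smul_normalize, norm_smul_normalize]
    abel
  calc ‖x‖ * ‖normalize x - normalize y‖ = ‖(x - y) + (‖y‖ - ‖x‖) • normalize y‖ := by
        rw [← hsplit, norm_smul, norm_norm]
    _ ≤ ‖x - y‖ + |‖y‖ - ‖x‖| * ‖normalize y‖ :=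
        (norm_add_le _ _).trans_eq (by rw [norm_smul, Real.norm_eq_abs])
    _ ≤ ‖x - y‖ + ‖x - y‖ * 1 := by
        gcongr
        rw [norm_sub_rev]
        exact abs_norm_sub_norm_le y x
    _ = 2 * ‖x - y‖ := by ring

variable {n : ℕ}

/-- The affine chart `{u | u i = 1}` of projective space, normalised to take values in the sphere.
The charts and their antipodes cover the sphere. -/
noncomputable def sphereChart (i : Fin (n + 1)) (y : Fin n → ℝ) : EuclideanSpace ℝ (Fin (n + 1)) :=
  normalize (WithLp.toLp 2 (i.insertNth (α := fun _ => ℝ) 1 y))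

lemma exists_lipschitzWith_sphereChart (i : Fin (n + 1)) :
    ∃ K, LipschitzWith K (sphereChart i) := by
  have hinsert : LipschitzWith 1 (i.insertNth (α := fun _ => ℝ) 1) := by
    refine LipschitzWith.mk_one fun y z => (dist_pi_le_iff dist_nonneg).2 fun j => ?_
    cases j using Fin.succAboveCases i with
    | x => simp
    | p j => simpa using dist_le_pi_dist y z j
  obtain ⟨K, haffine⟩ : ∃ K, LipschitzWith K fun y : Fin n → ℝ =>
      (WithLp.toLp 2 (i.insertNth 1 y) : EuclideanSpace ℝ (Fin (n + 1))) :=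
    ⟨_, (PiLp.lipschitzWith_toLp 2 _).comp hinsert⟩
  have hnorm (y : Fin n → ℝ) :
      1 ≤ ‖(WithLp.toLp 2 (i.insertNth 1 y) : EuclideanSpace ℝ (Fin (n + 1)))‖ := by
    simpa using PiLp.norm_apply_le
      (WithLp.toLp 2 (i.insertNth 1 y) : EuclideanSpace ℝ (Fin (n + 1))) i
  refine ⟨2 * K, LipschitzWith.of_dist_le_mul fun y z => ?_⟩
  have hdist := haffine.dist_le_mul y z
  rw [dist_eq_norm] at hdist ⊢
  refine (le_mul_of_one_le_left (norm_nonneg _) (hnorm y)).trans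
    ((norm_mul_norm_normalize_sub_le _ _).trans ?_)
  rw [NNReal.coe_mul, NNReal.coe_ofNat, mul_assoc]
  exact mul_le_mul_of_nonneg_left hdist zero_le_two

lemma exists_eq_smul_sphereChart {u : EuclideanSpace ℝ (Fin (n + 1))} (hu : ‖u‖ = 1)
    {i : Fin (n + 1)} (hi : u i ≠ 0) : ∃ s : SignType,
      u = (s : ℝ) • sphereChart i (fun j => u (i.succAbove j) / u i) := by
  refine ⟨SignType.sign (u i), ?_⟩
  rw [sphereChart, ← normalize_smul, ← WithLp.toLp_smul, smul_insertNth_one_div hi,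
    WithLp.toLp_ofLp, normalize_eq_self_of_norm_eq_one hu]

lemma hausdorffMeasure_setOf_eval_dehomogenize_eq_zero {m : ℕ}
    {p : MvPolynomial (Fin (n + 1)) ℝ} (hp : p.IsHomogeneous m) (hne : p ≠ 0) (i : Fin (n + 1)) :
    μH[(n : ℝ)] {y | MvPolynomial.eval y (dehomogenize i p) = 0} = 0 := by
  have hvol : (μH[(n : ℝ)] : Measure (Fin n → ℝ)) = Measure.pi fun _ => volume := by
    rw [← volume_pi, ← hausdorffMeasure_pi_real, Fintype.card_fin]
  rw [hvol]
  simpa [ae_iff] using ae_eval_ne_zero (fun _ => volume) (dehomogenize_ne_zero hp hne i)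

theorem hausdorffMeasure_sphere_inter_zeros_eq_zero {m : ℕ}
    {p : MvPolynomial (Fin (n + 1)) ℝ} (hp : p.IsHomogeneous m) (hne : p ≠ 0) :
    μH[(n : ℝ)] {u : EuclideanSpace ℝ (Fin (n + 1)) |
      ‖u‖ = 1 ∧ MvPolynomial.eval u.ofLp p = 0} = 0 := by
  set Z : Fin (n + 1) → Set (Fin n → ℝ) :=
    fun i => {y | MvPolynomial.eval y (dehomogenize i p) = 0}
  have hcover : {u : EuclideanSpace ℝ (Fin (n + 1)) |
      ‖u‖ = 1 ∧ MvPolynomial.eval u.ofLp p = 0} ⊆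
      ⋃ (i) (s : SignType), (fun y => (s : ℝ) • sphereChart i y) '' Z i := by
    rintro u ⟨hu, hpu⟩
    obtain ⟨i, hi⟩ : ∃ i, u i ≠ 0 := by
      by_contra! h
      have : u = 0 := PiLp.ext h
      simp [this] at hu
    obtain ⟨s, hs⟩ := exists_eq_smul_sphereChart hu hi
    have hZ : (fun j => u (i.succAbove j) / u i) ∈ Z i := by
      rw [← smul_insertNth_one_div hi, eval_smul_of_isHomogeneous hp,
        ← eval_dehomogenize] at hpu
      exact (mul_eq_zero.1 hpu).resolve_left (pow_ne_zero m hi)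
    exact Set.mem_iUnion₂.2 ⟨i, s, _, hZ, hs.symm⟩
  refine measure_mono_null hcover (measure_iUnion_null fun i => measure_iUnion_null fun s => ?_)
  obtain ⟨K, hK⟩ := exists_lipschitzWith_sphereChart i
  have himage := ((lipschitzWith_smul (s : ℝ)).comp hK).hausdorffMeasure_image_le
    n.cast_nonneg (Z i)
  rwa [hausdorffMeasure_setOf_eval_dehomogenize_eq_zero hp hne, mul_zero, nonpos_iff_eq_zero]
    at himage

/-- No nonzero homogeneous polynomial vanishes on `A`: the lines spanned by the elements of `A`
are Zariski dense in projective space. -/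
def IsProjectivelyZariskiDense {ι : Type*} (A : Set (EuclideanSpace ℝ ι)) : Prop :=
  ∀ ⦃m : ℕ⦄ ⦃p : MvPolynomial ι ℝ⦄, p.IsHomogeneous m →
    (∀ u ∈ A, MvPolynomial.eval u.ofLp p = 0) → p = 0

theorem isProjectivelyZariskiDense_of_hausdorffMeasure_pos {d : ℕ}
    {A : Set (EuclideanSpace ℝ (Fin d))} (hAs : A ⊆ Metric.sphere 0 1)
    (hApos : 0 < μH[(d : ℝ) - 1] A) : IsProjectivelyZariskiDense A := by
  intro m p hp hzero
  by_contra hne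
  refine hApos.ne' ?_
  cases d with
  | zero =>
    have hempty : A = ∅ := Set.eq_empty_of_forall_notMem fun u hu => by
      simpa [Subsingleton.elim u 0] using hAs hu
    rw [hempty, measure_empty]
  | succ n =>
    rw [Nat.cast_succ, add_sub_cancel_right]
    refine measure_mono_null (fun u hu => ?_)
      (hausdorffMeasure_sphere_inter_zeros_eq_zero hp hne)
    exact ⟨mem_sphere_zero_iff_norm.1 (hAs hu), hzero u hu⟩

end Sphere

section PowersOfLinearForms

open MvPolynomial

variable {R ι : Type*} [CommSemiring R] [Fintype ι]

/-- The linear form with coefficients `v`, as a polynomial. -/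
noncomputable def linearForm (v : ι → R) : MvPolynomial ι R :=
  ∑ i, v i • X i

lemma eval_linearForm (v x : ι → R) : eval x (linearForm v) = v ⬝ᵥ x := by
  simp [linearForm, dotProduct, smul_eval]

lemma isHomogeneous_linearForm (v : ι → R) : (linearForm v).IsHomogeneous 1 :=
  IsHomogeneous.sum _ _ _ fun i _ => by
    rw [smul_eq_C_mul]
    exact isHomogeneous_C_mul_X _ i

variable [DecidableEq ι]

lemma linearForm_pow (v : ι → R) (m : ℕ) :
    linearForm v ^ m = ∑ k ∈ Finset.univ.finsuppAntidiag m,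
      monomial k (k.multinomial * k.prod fun i e => v i ^ e) := by
  ext k
  simp [linearForm, coeff_linearCombination_X_pow_of_fintype, coeff_sum, coeff_monomial,
    Finset.mem_finsuppAntidiag, Finsupp.sum_fintype]

/-- The form of degree `m` whose value at `v` is the value of the functional `f` at the `m`-th
power of the linear form `v`. When `f` integrates against a measure, this value is the `m`-th
moment in the direction `v`. -/
noncomputable def apolarForm (f : MvPolynomial ι R →ₗ[R] R) (m : ℕ) : MvPolynomial ι R :=
  ∑ k ∈ Finset.univ.finsuppAntidiag m, monomial k (k.multinomial * f (monomial k 1))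

lemma isHomogeneous_apolarForm (f : MvPolynomial ι R →ₗ[R] R) (m : ℕ) :
    (apolarForm f m).IsHomogeneous m :=
  IsHomogeneous.sum _ _ _ fun k hk => isHomogeneous_monomial _ <| by
    rw [Finsupp.degree_eq_sum]
    exact (Finset.mem_finsuppAntidiag.1 hk).1

lemma eval_apolarForm (f : MvPolynomial ι R →ₗ[R] R) (m : ℕ) (v : ι → R) :
    eval v (apolarForm f m) = f (linearForm v ^ m) := by
  rw [linearForm_pow, apolarForm, map_sum, map_sum]
  refine Finset.sum_congr rfl fun k _ => ?_
  rw [← mul_one (_ * k.prod _), ← smul_eq_mul _ 1, ← smul_monomial, map_smul, eval_monomial,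
    smul_eq_mul]
  ring

lemma coeff_apolarForm_degree (f : MvPolynomial ι R →ₗ[R] R) (k : ι →₀ ℕ) :
    coeff k (apolarForm f k.degree) = k.multinomial * f (monomial k 1) := by
  simp [apolarForm, coeff_sum, coeff_monomial, Finset.mem_finsuppAntidiag, Finsupp.degree_eq_sum]

end PowersOfLinearForms

section ProjectivelyZariskiDense

variable {ι : Type*} {A : Set (EuclideanSpace ℝ ι)}

lemma eval_linearForm_ofLp [Fintype ι] (v x : EuclideanSpace ℝ ι) :
    MvPolynomial.eval x.ofLp (linearForm v.ofLp) = ⟪v, x⟫_ℝ := by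
  rw [eval_linearForm, EuclideanSpace.inner_eq_star_dotProduct, star_trivial, dotProduct_comm]

theorem IsProjectivelyZariskiDense.span_eq_top [Finite ι] (hA : IsProjectivelyZariskiDense A) :
    Submodule.span ℝ A = ⊤ := by
  cases nonempty_fintype ι
  rw [← Submodule.orthogonal_eq_bot_iff, Submodule.eq_bot_iff]
  intro v hv
  have hform : linearForm v.ofLp = 0 := hA (isHomogeneous_linearForm _) fun u hu => by
    rw [eval_linearForm_ofLp]
    exact (Submodule.mem_orthogonal' _ _).1 hv u (Submodule.subset_span hu)
  rw [← inner_self_eq_zero (𝕜 := ℝ), ← eval_linearForm_ofLp, hform, map_zero]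

theorem IsProjectivelyZariskiDense.span_linearForm_pow_eq_top [Fintype ι]
    (hA : IsProjectivelyZariskiDense A) :
    Submodule.span ℝ {p | ∃ v ∈ A, ∃ m : ℕ, p = linearForm v.ofLp ^ m} = ⊤ := by
  classical
  by_contra hne
  obtain ⟨f, hf, hker⟩ := Submodule.exists_le_ker_of_lt_top _ (lt_top_iff_ne_top.2 hne)
  have hapolar (m : ℕ) : apolarForm f m = 0 := hA (isHomogeneous_apolarForm f m) fun u hu => by
    rw [eval_apolarForm]
    exact hker (Submodule.subset_span ⟨u, hu, m, rfl⟩)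
  refine hf ((MvPolynomial.basisMonomials ι ℝ).ext fun k => ?_)
  have hcoeff := coeff_apolarForm_degree f k
  rw [hapolar, MvPolynomial.coeff_zero, zero_eq_mul] at hcoeff
  simpa using hcoeff.resolve_left (Nat.cast_ne_zero.2 (Nat.multinomial_pos _ _).ne')

end ProjectivelyZariskiDense

section Moments

open MvPolynomial (eval)

lemma memLp_inner_of_span_eq_top {E : Type*} [NormedAddCommGroup E] [InnerProductSpace ℝ E]
    [MeasurableSpace E] [BorelSpace E] {μ : Measure E} [IsFiniteMeasure μ]
    {B : Set E} (hB : Submodule.span ℝ B = ⊤) {q : ℕ}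
    (h : ∀ v ∈ B, Integrable (fun t : ℝ => |t| ^ q) (μ.map fun x => ⟪v, x⟫_ℝ)) (v : E) :
    MemLp (fun x => ⟪v, x⟫_ℝ) q μ := by
  have hv : v ∈ Submodule.span ℝ B := hB ▸ Submodule.mem_top
  induction hv using Submodule.span_induction with
  | mem v hv =>
    have hmap := (integrable_map_measure (by fun_prop) (by fun_prop)).1 (h v hv)
    rcases eq_or_ne q 0 with rfl | hq
    · rw [Nat.cast_zero, memLp_zero_iff_aestronglyMeasurable]
      fun_prop
    · rw [← integrable_norm_rpow_iff (by fun_prop) (Nat.cast_ne_zero.2 hq)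
        (ENNReal.natCast_ne_top q)]
      simpa [Function.comp_def] using hmap
  | zero => simp
  | add x y _ _ hx hy =>
    simp only [inner_add_left]
    exact hx.add hy
  | smul a x _ hx =>
    simp only [real_inner_smul_left]
    exact hx.const_mul a

variable {ι : Type*} {μ ν : Measure (EuclideanSpace ℝ ι)}

/-- All polynomials are `μ`-integrable: the measure has finite mixed moments of all orders. -/
def HasAllMoments (μ : Measure (EuclideanSpace ℝ ι)) : Prop :=
  ∀ p : MvPolynomial ι ℝ, Integrable (fun x => eval x.ofLp p) μ

lemma continuous_eval_ofLp (p : MvPolynomial ι ℝ) :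
    Continuous fun x : EuclideanSpace ℝ ι => eval x.ofLp p :=
  (MvPolynomial.continuous_eval p).comp (PiLp.continuous_ofLp 2 _)

lemma HasAllMoments.memLp_two_eval [Finite ι] (hμ : HasAllMoments μ) (p : MvPolynomial ι ℝ) :
    MemLp (fun x => eval x.ofLp p) 2 μ := by
  rw [memLp_two_iff_integrable_sq (continuous_eval_ofLp p).aestronglyMeasurable]
  simpa only [← map_pow] using hμ (p ^ 2)

variable [Fintype ι]

lemma memLp_eval_of_memLp_inner [IsFiniteMeasure μ]
    (h : ∀ (v : EuclideanSpace ℝ ι) (q : ℕ), MemLp (fun x => ⟪v, x⟫_ℝ) q μ)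
    (p : MvPolynomial ι ℝ) (q : ℕ) : MemLp (fun x => eval x.ofLp p) q μ := by
  classical
  induction p using MvPolynomial.induction_on generalizing q with
  | C a => simpa only [MvPolynomial.eval_C] using memLp_const a
  | add p r hp hr =>
    simp only [map_add]
    exact (hp q).add (hr q)
  | mul_X p i hp =>
    have hcoord : MemLp (fun x : EuclideanSpace ℝ ι => x i) (2 * q : ℕ) μ := by
      simpa [EuclideanSpace.inner_single_left] using h (EuclideanSpace.single i 1) (2 * q)
    have : ENNReal.HolderTriple (2 * q : ℕ) (2 * q : ℕ) q := ⟨by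
      rw [Nat.cast_mul, Nat.cast_ofNat, ENNReal.mul_inv (by simp) (by simp), ← add_mul,
        ENNReal.inv_two_add_inv_two, one_mul]⟩
    simpa only [map_mul, MvPolynomial.eval_X] using hcoord.mul' (hp (2 * q))

theorem hasAllMoments_of_span_eq_top [IsFiniteMeasure μ] {B : Set (EuclideanSpace ℝ ι)}
    (hB : Submodule.span ℝ B = ⊤)
    (h : ∀ v ∈ B, ∀ m : ℕ, Integrable (fun t : ℝ => |t| ^ m) (μ.map fun x => ⟪v, x⟫_ℝ)) :
    HasAllMoments μ := fun p => by
  rw [← memLp_one_iff_integrable, ← Nat.cast_one]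
  exact memLp_eval_of_memLp_inner
    (fun v q => memLp_inner_of_span_eq_top hB (fun u hu => h u hu q) v) p 1

lemma HasAllMoments.integrable_abs_pow_map_inner (hμ : HasAllMoments μ)
    (v : EuclideanSpace ℝ ι) (m : ℕ) :
    Integrable (fun t : ℝ => |t| ^ m) (μ.map fun x => ⟪v, x⟫_ℝ) := by
  rw [integrable_map_measure (by fun_prop) (by fun_prop)]
  simpa [eval_linearForm_ofLp, abs_pow, Function.comp_def] using (hμ (linearForm v.ofLp ^ m)).abs

lemma integral_eval_linearForm_pow (μ : Measure (EuclideanSpace ℝ ι)) (v : EuclideanSpace ℝ ι)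
    (m : ℕ) :
    ∫ x, eval x.ofLp (linearForm v.ofLp ^ m) ∂μ = ∫ t, t ^ m ∂μ.map fun x => ⟪v, x⟫_ℝ := by
  rw [integral_map (by fun_prop) (by fun_prop)]
  simp only [map_pow, eval_linearForm_ofLp]

theorem integral_eval_eq_of_map_inner_eq {A : Set (EuclideanSpace ℝ ι)}
    (hA : IsProjectivelyZariskiDense A) (hμ : HasAllMoments μ) (hν : HasAllMoments ν)
    (h : ∀ v ∈ A, μ.map (fun x => ⟪v, x⟫_ℝ) = ν.map fun x => ⟪v, x⟫_ℝ) (p : MvPolynomial ι ℝ) :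
    ∫ x, eval x.ofLp p ∂μ = ∫ x, eval x.ofLp p ∂ν := by
  have hp : p ∈ Submodule.span ℝ {p | ∃ v ∈ A, ∃ m : ℕ, p = linearForm v.ofLp ^ m} :=
    hA.span_linearForm_pow_eq_top ▸ Submodule.mem_top
  induction hp using Submodule.span_induction with
  | mem p hp =>
    obtain ⟨v, hv, m, rfl⟩ := hp
    rw [integral_eval_linearForm_pow, integral_eval_linearForm_pow, h v hv]
  | zero => simp
  | add p r _ _ hp hr =>
    simp only [map_add]
    rw [integral_add (hμ p) (hμ r), integral_add (hν p) (hν r), hp, hr]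
  | smul a p _ hp => simp only [MvPolynomial.smul_eval, integral_const_mul, hp]

end Moments

section FourierMoments

lemma norm_ofReal_mul_exp_ofReal_mul_I (a θ : ℝ) :
    ‖(a : ℂ) * Complex.exp (θ * Complex.I)‖ = |a| := by
  rw [norm_mul, Complex.norm_exp_ofReal_mul_I, mul_one, Complex.norm_real, Real.norm_eq_abs]

variable {E : Type*} [NormedAddCommGroup E] [InnerProductSpace ℝ E]

lemma hasDerivAt_fourierMoment_integrand (f : E → ℝ) (w v x : E) (t : ℝ) :
    HasDerivAt (fun t : ℝ => (f x : ℂ) * Complex.exp (⟪w + t • v, x⟫_ℝ * Complex.I))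
      (Complex.I *
        (((f x * ⟪v, x⟫_ℝ : ℝ) : ℂ) * Complex.exp (⟪w + t • v, x⟫_ℝ * Complex.I))) t := by
  have hline : HasDerivAt (fun t : ℝ => ⟪w + t • v, x⟫_ℝ) ⟪v, x⟫_ℝ t := by
    simp only [inner_add_left, real_inner_smul_left]
    simpa using ((hasDerivAt_id t).mul_const ⟪v, x⟫_ℝ).const_add ⟪w, x⟫_ℝ
  convert! ((hline.ofReal_comp.mul_const Complex.I).cexp.const_mul (f x : ℂ)) using 1
  push_cast
  ring

variable [MeasurableSpace E]

/-- The Fourier transform at `w` of the signed measure with density `f` with respect to `μ`, in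
the convention of `charFun`. For monomials `f` these are the partial derivatives of the
characteristic function, up to powers of the imaginary unit. -/
noncomputable def fourierMoment (μ : Measure E) (f : E → ℝ) (w : E) : ℂ :=
  ∫ x, f x * Complex.exp (⟪w, x⟫_ℝ * Complex.I) ∂μ

variable {μ ν : Measure E} {f : E → ℝ}

lemma fourierMoment_zero (μ : Measure E) (f : E → ℝ) :
    fourierMoment μ f 0 = (∫ x, f x ∂μ : ℝ) := by
  simp [fourierMoment, integral_complex_ofReal]

lemma fourierMoment_one_eq_charFun (μ : Measure E) (w : E) :
    fourierMoment μ (fun _ => 1) w = charFun μ w := by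
  simp [fourierMoment, charFun_apply, real_inner_comm]

variable [BorelSpace E] [SecondCountableTopology E]

lemma integrable_fourierMoment_integrand (hf : Integrable f μ) (w : E) :
    Integrable (fun x => (f x : ℂ) * Complex.exp (⟪w, x⟫_ℝ * Complex.I)) μ :=
  hf.abs.mono' (hf.ofReal.aestronglyMeasurable.mul (by fun_prop))
    (.of_forall fun x => (norm_ofReal_mul_exp_ofReal_mul_I _ _).le)

lemma hasDerivAt_fourierMoment {v : E} (hf : Integrable f μ)
    (hfv : Integrable (fun x => f x * ⟪v, x⟫_ℝ) μ) (w : E) (t : ℝ) :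
    HasDerivAt (fun t : ℝ => fourierMoment μ f (w + t • v))
      (Complex.I * fourierMoment μ (fun x => f x * ⟪v, x⟫_ℝ) (w + t • v)) t := by
  rw [fourierMoment, ← integral_const_mul]
  refine (hasDerivAt_integral_of_dominated_loc_of_deriv_le univ_mem
    (.of_forall fun t => (integrable_fourierMoment_integrand hf _).aestronglyMeasurable)
    (integrable_fourierMoment_integrand hf _)
    ((integrable_fourierMoment_integrand hfv _).const_mul _).aestronglyMeasurable
    (.of_forall fun x t _ => ?_) hfv.abs
    (.of_forall fun x t _ => hasDerivAt_fourierMoment_integrand f w v x t)).2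
  rw [norm_mul, Complex.norm_I, one_mul, norm_ofReal_mul_exp_ofReal_mul_I]

lemma memLp_two_inner_pow {v : E}
    (hi : ∀ m : ℕ, Integrable (fun t => |t| ^ m) (μ.map fun x => ⟪v, x⟫_ℝ)) (n : ℕ) :
    MemLp (fun x => ⟪v, x⟫_ℝ ^ n) 2 μ := by
  rw [memLp_two_iff_integrable_sq (by fun_prop)]
  simpa [Function.comp_def, ← pow_mul, mul_comm n, (even_two_mul n).pow_abs] using
    (integrable_map_measure (by fun_prop) (by fun_prop)).1 (hi (2 * n))

lemma norm_fourierMoment_mul_inner_pow_le {v : E} (hf : MemLp f 2 μ)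
    (hi : ∀ m : ℕ, Integrable (fun t => |t| ^ m) (μ.map fun x => ⟪v, x⟫_ℝ)) (n : ℕ) (w : E) :
    ‖fourierMoment μ (fun x => f x * ⟪v, x⟫_ℝ ^ n) w‖ ≤
      √(∫ x, f x ^ 2 ∂μ) * momentNorm (μ.map fun x => ⟪v, x⟫_ℝ) n := by
  have hpow := memLp_two_inner_pow hi n
  rw [← ENNReal.ofReal_ofNat] at hf hpow
  have hmoment : ∫ x, ‖⟪v, x⟫_ℝ ^ n‖ ^ (2 : ℝ) ∂μ =
      ∫ t, |t| ^ (2 * n) ∂μ.map fun x => ⟪v, x⟫_ℝ := by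
    rw [integral_map (by fun_prop) (by fun_prop)]
    simp only [norm_pow, Real.norm_eq_abs, Real.rpow_ofNat, ← pow_mul, mul_comm n]
  calc ‖fourierMoment μ (fun x => f x * ⟪v, x⟫_ℝ ^ n) w‖
      ≤ ∫ x, ‖f x‖ * ‖⟪v, x⟫_ℝ ^ n‖ ∂μ := by
        refine (norm_integral_le_integral_norm _).trans_eq ?_
        simp only [norm_ofReal_mul_exp_ofReal_mul_I, abs_mul, Real.norm_eq_abs]
    _ ≤ _ := integral_mul_norm_le_Lp_mul_Lq Real.HolderConjugate.two_two hf hpow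
    _ = _ := by
        rw [hmoment, momentNorm, Real.sqrt_eq_rpow, Real.sqrt_eq_rpow]
        simp only [Real.rpow_ofNat, Real.norm_eq_abs, sq_abs]

theorem fourierMoment_add_smul_eq_of_carleman [IsProbabilityMeasure μ] {v w : E}
    (hfμ : MemLp f 2 μ) (hfν : MemLp f 2 ν)
    (hiμ : ∀ m : ℕ, Integrable (fun t => |t| ^ m) (μ.map fun x => ⟪v, x⟫_ℝ))
    (hiν : ∀ m : ℕ, Integrable (fun t => |t| ^ m) (ν.map fun x => ⟪v, x⟫_ℝ))
    (hC : Carleman (μ.map fun x => ⟪v, x⟫_ℝ))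
    (hM : momentNorm (ν.map fun x => ⟪v, x⟫_ℝ) = momentNorm (μ.map fun x => ⟪v, x⟫_ℝ))
    (hw : ∀ n : ℕ, fourierMoment μ (fun x => f x * ⟪v, x⟫_ℝ ^ n) w =
      fourierMoment ν (fun x => f x * ⟪v, x⟫_ℝ ^ n) w) (t : ℝ) :
    fourierMoment μ f (w + t • v) = fourierMoment ν f (w + t • v) := by
  have : IsProbabilityMeasure (μ.map fun x => ⟪v, x⟫_ℝ) :=
    Measure.isProbabilityMeasure_map (by fun_prop)
  have hderiv {ρ : Measure E} (hf : MemLp f 2 ρ)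
      (hi : ∀ m : ℕ, Integrable (fun t => |t| ^ m) (ρ.map fun x => ⟪v, x⟫_ℝ)) (n : ℕ) (t : ℝ) :
      HasDerivAt (fun t : ℝ => fourierMoment ρ (fun x => f x * ⟪v, x⟫_ℝ ^ n) (w + t • v))
        (Complex.I * fourierMoment ρ (fun x => f x * ⟪v, x⟫_ℝ ^ (n + 1)) (w + t • v)) t := by
    have hint (k : ℕ) : Integrable (fun x => f x * ⟪v, x⟫_ℝ ^ k) ρ :=
      hf.integrable_mul (memLp_two_inner_pow hi k)
    have hsucc (x : E) : f x * ⟪v, x⟫_ℝ ^ (n + 1) = f x * ⟪v, x⟫_ℝ ^ n * ⟪v, x⟫_ℝ := by ring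
    simp only [hsucc] at hint ⊢
    exact hasDerivAt_fourierMoment (hint n) (by simpa only [hsucc] using hint (n + 1)) w t
  have hzero := denjoy_carleman (momentNorm_pos hiμ hC) (monotone_momentNorm_ratio hiμ hC)
    (not_summable_momentNorm_ratio hiμ hC) (C := √(∫ x, f x ^ 2 ∂μ) + √(∫ x, f x ^ 2 ∂ν))
    (F := fun n t => Complex.I ^ n * (fourierMoment μ (fun x => f x * ⟪v, x⟫_ℝ ^ n) (w + t • v) -
      fourierMoment ν (fun x => f x * ⟪v, x⟫_ℝ ^ n) (w + t • v)))
    (fun n t => ?_) (fun n t => ?_) (fun n => ?_) t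
  · simpa [sub_eq_zero] using hzero
  · convert! ((hderiv hfμ hiμ n t).sub (hderiv hfν hiν n t)).const_mul (Complex.I ^ n) using 1
    ring
  · rw [norm_mul, norm_pow, Complex.norm_I, one_pow, one_mul, add_mul]
    refine norm_sub_le_of_le (norm_fourierMoment_mul_inner_pow_le hfμ hiμ n _) ?_
    rw [← hM]
    exact norm_fourierMoment_mul_inner_pow_le hfν hiν n _
  · simp [hw]

end FourierMoments

section Determinacy

open MvPolynomial (eval)
open scoped Pointwise

variable {ι : Type*} [Fintype ι] {μ ν : Measure (EuclideanSpace ℝ ι)}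
  {B : Set (EuclideanSpace ℝ ι)}

lemma momentNorm_map_inner (μ : Measure (EuclideanSpace ℝ ι)) (v : EuclideanSpace ℝ ι) (n : ℕ) :
    momentNorm (μ.map fun x => ⟪v, x⟫_ℝ) n =
      √(∫ x, eval x.ofLp (linearForm v.ofLp ^ (2 * n)) ∂μ) := by
  simp only [integral_eval_linearForm_pow, momentNorm, (even_two_mul n).pow_abs]

lemma fourierMoment_eval_add_smul_eq_of_carleman [IsProbabilityMeasure μ]
    (hμ : HasAllMoments μ) (hν : HasAllMoments ν)
    (h : ∀ p : MvPolynomial ι ℝ, ∫ x, eval x.ofLp p ∂μ = ∫ x, eval x.ofLp p ∂ν)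
    {v w : EuclideanSpace ℝ ι} (hC : Carleman (μ.map fun x => ⟪v, x⟫_ℝ))
    (hw : ∀ p : MvPolynomial ι ℝ, fourierMoment μ (fun x => eval x.ofLp p) w =
      fourierMoment ν (fun x => eval x.ofLp p) w) (t : ℝ) (p : MvPolynomial ι ℝ) :
    fourierMoment μ (fun x => eval x.ofLp p) (w + t • v) =
      fourierMoment ν (fun x => eval x.ofLp p) (w + t • v) := by
  refine fourierMoment_add_smul_eq_of_carleman (hμ.memLp_two_eval p) (hν.memLp_two_eval p)
    (hμ.integrable_abs_pow_map_inner v) (hν.integrable_abs_pow_map_inner v) hC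
    (funext fun n => ?_) (fun n => ?_) t
  · rw [momentNorm_map_inner, momentNorm_map_inner, h]
  · simpa only [map_mul, map_pow, eval_linearForm_ofLp] using hw (p * linearForm v.ofLp ^ n)

theorem fourierMoment_eval_eq_of_carleman [IsProbabilityMeasure μ]
    (hμ : HasAllMoments μ) (hν : HasAllMoments ν)
    (h : ∀ p : MvPolynomial ι ℝ, ∫ x, eval x.ofLp p ∂μ = ∫ x, eval x.ofLp p ∂ν)
    (hB : Submodule.span ℝ B = ⊤) (hC : ∀ v ∈ B, Carleman (μ.map fun x => ⟪v, x⟫_ℝ))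
    (w : EuclideanSpace ℝ ι) (p : MvPolynomial ι ℝ) :
    fourierMoment μ (fun x => eval x.ofLp p) w = fourierMoment ν (fun x => eval x.ofLp p) w := by
  have hw : w ∈ AddSubmonoid.closure (@Set.univ ℝ • B) := by
    rw [← Submodule.span_eq_closure, hB]
    exact Submodule.mem_top
  induction hw using AddSubmonoid.closure_induction_right generalizing p with
  | zero => rw [fourierMoment_zero, fourierMoment_zero, h]
  | add_right w _ _ htv hw =>
    obtain ⟨t, -, v, hv, rfl⟩ := htv
    exact fourierMoment_eval_add_smul_eq_of_carleman hμ hν h (hC v hv) hw t p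

theorem eq_of_integral_eval_eq_of_carleman [IsProbabilityMeasure μ] [IsFiniteMeasure ν]
    (hμ : HasAllMoments μ) (hν : HasAllMoments ν)
    (h : ∀ p : MvPolynomial ι ℝ, ∫ x, eval x.ofLp p ∂μ = ∫ x, eval x.ofLp p ∂ν)
    (hB : Submodule.span ℝ B = ⊤) (hC : ∀ v ∈ B, Carleman (μ.map fun x => ⟪v, x⟫_ℝ)) :
    μ = ν := by
  refine Measure.ext_of_charFun (funext fun w => ?_)
  simpa only [map_one, fourierMoment_one_eq_charFun] using
    fourierMoment_eval_eq_of_carleman hμ hν h hB hC w 1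

end Determinacy

section Convergence

variable {E : Type*} [NormedAddCommGroup E] [InnerProductSpace ℝ E] [MeasurableSpace E]
  [BorelSpace E]

lemma isTightMeasureSet_map_inner_zero (S : Set (Measure E)) :
    IsTightMeasureSet ((fun μ => μ.map fun x => ⟪(0 : E), x⟫_ℝ) '' S) := by
  rw [isTightMeasureSet_iff_exists_isCompact_measure_compl_le]
  refine fun ε _ => ⟨{0}, isCompact_singleton, ?_⟩
  rintro _ ⟨μ, -, rfl⟩
  rw [Measure.map_apply (by fun_prop) (measurableSet_singleton 0).compl]
  simp

lemma isTightMeasureSet_map_inner_smul {S : Set (Measure E)} {y : E}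
    (hy : IsTightMeasureSet ((fun μ => μ.map fun x => ⟪y, x⟫_ℝ) '' S)) (a : ℝ) :
    IsTightMeasureSet ((fun μ => μ.map fun x => ⟪a • y, x⟫_ℝ) '' S) := by
  convert! hy.map (continuous_const_mul a) using 1
  rw [Set.image_image]
  refine Set.image_congr fun μ _ => ?_
  rw [Measure.map_map (by fun_prop) (by fun_prop)]
  simp only [Function.comp_def, real_inner_smul_left]

lemma isTightMeasureSet_map_inner_add {S : Set (Measure E)} {y z : E}
    (hy : IsTightMeasureSet ((fun μ => μ.map fun x => ⟪y, x⟫_ℝ) '' S))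
    (hz : IsTightMeasureSet ((fun μ => μ.map fun x => ⟪z, x⟫_ℝ) '' S)) :
    IsTightMeasureSet ((fun μ => μ.map fun x => ⟪y + z, x⟫_ℝ) '' S) := by
  have hpair : IsTightMeasureSet ((fun μ => μ.map fun x => (⟪y, x⟫_ℝ, ⟪z, x⟫_ℝ)) '' S) := by
    refine IsTightMeasureSet.prodMk ?_ ?_
    · simpa only [Set.image_image,
        Measure.fst_map_prodMk (Y := fun x : E => ⟪z, x⟫_ℝ) (by fun_prop)] using hy
    · simpa only [Set.image_image,
        Measure.snd_map_prodMk (X := fun x : E => ⟪y, x⟫_ℝ) (by fun_prop)] using hz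
  convert! hpair.map continuous_add using 1
  rw [Set.image_image]
  refine Set.image_congr fun μ _ => ?_
  rw [Measure.map_map (by fun_prop) (by fun_prop)]
  simp only [Function.comp_def, inner_add_left]

theorem isTightMeasureSet_of_map_inner_of_span_eq_top [FiniteDimensional ℝ E]
    {S : Set (Measure E)} {B : Set E} (hB : Submodule.span ℝ B = ⊤)
    (h : ∀ v ∈ B, IsTightMeasureSet ((fun μ => μ.map fun x => ⟪v, x⟫_ℝ) '' S)) :
    IsTightMeasureSet S := by
  have hall (y : E) : IsTightMeasureSet ((fun μ => μ.map fun x => ⟪y, x⟫_ℝ) '' S) := by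
    have hy : y ∈ Submodule.span ℝ B := hB ▸ Submodule.mem_top
    induction hy using Submodule.span_induction with
    | mem v hv => exact h v hv
    | zero => exact isTightMeasureSet_map_inner_zero S
    | add y z _ _ hy hz => exact isTightMeasureSet_map_inner_add hy hz
    | smul a y _ hy => exact isTightMeasureSet_map_inner_smul hy a
  refine isTightMeasureSet_of_inner_tendsto ℝ fun y => ?_
  convert! tendsto_measure_norm_gt_of_isTightMeasureSet (hall y) using 2 with r
  rw [iSup_image]
  refine iSup_congr fun μ => iSup_congr fun _ => ?_
  rw [Measure.map_apply (by fun_prop) (measurableSet_lt measurable_const measurable_norm)]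
  rfl

theorem isTightMeasureSet_of_map_inner_tendsto [FiniteDimensional ℝ E] {B : Set E}
    (hB : Submodule.span ℝ B = ⊤) {μ : ℕ → ProbabilityMeasure E}
    {ν : E → ProbabilityMeasure ℝ}
    (h : ∀ v ∈ B, Tendsto (fun n => (μ n).map (f := fun x => ⟪v, x⟫_ℝ) (by fun_prop)) atTop
      (𝓝 (ν v))) :
    IsTightMeasureSet {(ρ : Measure E) | ρ ∈ Set.range μ} := by
  refine isTightMeasureSet_of_map_inner_of_span_eq_top hB fun v hv => ?_
  have hcompact : IsCompact (closure (Set.range fun n =>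
      (μ n).map (f := fun x => ⟪v, x⟫_ℝ) (by fun_prop))) :=
    (h v hv).isCompact_insert_range.closure_of_subset (Set.subset_insert _ _)
  refine (isTightMeasureSet_of_isCompact_closure hcompact).subset ?_
  rintro _ ⟨_, ⟨_, ⟨n, rfl⟩, rfl⟩, rfl⟩
  exact ⟨_, ⟨n, rfl⟩, rfl⟩

lemma eq_of_mapClusterPt_of_tendsto {X Y : Type*} [TopologicalSpace X] [TopologicalSpace Y]
    [T2Space Y] {α : Type*} {l : Filter α} {u : α → X} {x : X} {y : Y} {f : X → Y}
    (hx : MapClusterPt x l u) (hf : ContinuousAt f x) (hy : Tendsto (f ∘ u) l (𝓝 y)) : f x = y :=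
  have : (𝓝 (f x) ⊓ 𝓝 y).NeBot := (hx.continuousAt_comp hf).clusterPt.mono hy
  eq_of_nhds_neBot this

lemma weakTendsto_iff_tendsto {X : Type*} [MeasurableSpace X] [TopologicalSpace X]
    [OpensMeasurableSpace X] {μ : ℕ → ProbabilityMeasure X} {ν : ProbabilityMeasure X} :
    WeakTendsto (fun n => (μ n : Measure X)) ν ↔ Tendsto μ atTop (𝓝 ν) :=
  ProbabilityMeasure.tendsto_iff_forall_integral_tendsto.symm

theorem weakTendsto_of_map_inner_weakTendsto [FiniteDimensional ℝ E] {A : Set E}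
    (hA : Submodule.span ℝ A = ⊤) {Pn : ℕ → Measure E} {P : Measure E}
    [∀ n, IsProbabilityMeasure (Pn n)] [IsProbabilityMeasure P]
    (h : ∀ v ∈ A, WeakTendsto (fun n => (Pn n).map fun x => ⟪v, x⟫_ℝ) (P.map fun x => ⟪v, x⟫_ℝ))
    (hunique : ∀ Q : Measure E, IsProbabilityMeasure Q →
      (∀ v ∈ A, P.map (fun x => ⟪v, x⟫_ℝ) = Q.map fun x => ⟪v, x⟫_ℝ) → P = Q) :
    WeakTendsto Pn P := by
  obtain ⟨μ, rfl⟩ : ∃ μ : ℕ → ProbabilityMeasure E, Pn = fun n => (μ n : Measure E) :=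
    ⟨fun n => ⟨Pn n, inferInstance⟩, rfl⟩
  obtain ⟨ν, rfl⟩ : ∃ ν : ProbabilityMeasure E, P = ν := ⟨⟨P, inferInstance⟩, rfl⟩
  have hproj : ∀ v ∈ A, Tendsto (fun n => (μ n).map (f := fun x => ⟪v, x⟫_ℝ) (by fun_prop)) atTop
      (𝓝 (ν.map (f := fun x => ⟪v, x⟫_ℝ) (by fun_prop))) :=
    fun v hv => weakTendsto_iff_tendsto.1 (h v hv)
  have hcompact := isCompact_closure_of_isTightMeasureSet
    (isTightMeasureSet_of_map_inner_tendsto hA hproj)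
  refine weakTendsto_iff_tendsto.2 <| hcompact.tendsto_nhds_of_unique_mapClusterPt
    (.of_forall fun n => subset_closure ⟨n, rfl⟩) fun Q _ hQ => ?_
  refine Subtype.ext (hunique Q inferInstance fun v hv => ?_).symm
  exact congrArg ProbabilityMeasure.toMeasure (eq_of_mapClusterPt_of_tendsto hQ
    (ProbabilityMeasure.continuous_map (by fun_prop)).continuousAt (hproj v hv)).symm

end Convergence

theorem eq_of_map_inner_eq_of_carleman {ι : Type*} [Fintype ι] {A B : Set (EuclideanSpace ℝ ι)}
    (hA : IsProjectivelyZariskiDense A) (hB : Submodule.span ℝ B = ⊤)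
    {P Q : Measure (EuclideanSpace ℝ ι)} [IsProbabilityMeasure P] [IsFiniteMeasure Q]
    (h : ∀ v ∈ A, P.map (fun x => ⟪v, x⟫_ℝ) = Q.map fun x => ⟪v, x⟫_ℝ)
    (hP : ∀ v ∈ B, (∀ m : ℕ, Integrable (fun t => |t| ^ m) (P.map fun x => ⟪v, x⟫_ℝ)) ∧
      Carleman (P.map fun x => ⟪v, x⟫_ℝ)) :
    P = Q := by
  have hPmom : HasAllMoments P := hasAllMoments_of_span_eq_top hB fun v hv => (hP v hv).1
  have hQmom : HasAllMoments Q := hasAllMoments_of_span_eq_top hA.span_eq_top fun v hv m =>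
    h v hv ▸ hPmom.integrable_abs_pow_map_inner v m
  exact eq_of_integral_eval_eq_of_carleman hPmom hQmom
    (integral_eval_eq_of_map_inner_eq hA hPmom hQmom h) hB fun v hv => (hP v hv).2

theorem stmt13_general {ι : Type*} [Fintype ι] {A B : Set (EuclideanSpace ℝ ι)}
    (hA : IsProjectivelyZariskiDense A) (hB : Submodule.span ℝ B = ⊤)
    (Pn : ℕ → Measure (EuclideanSpace ℝ ι)) (P : Measure (EuclideanSpace ℝ ι))
    [∀ n, IsProbabilityMeasure (Pn n)] [IsProbabilityMeasure P]
    (H1 : ∀ v ∈ A, WeakTendsto (fun n => (Pn n).map (fun x => ⟪v, x⟫_ℝ))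
      (P.map (fun x => ⟪v, x⟫_ℝ)))
    (H2 : ∀ v ∈ B, (∀ m : ℕ,
        Integrable (fun t => |t| ^ m) (P.map (fun x => ⟪v, x⟫_ℝ))) ∧
      Carleman (P.map (fun x => ⟪v, x⟫_ℝ))) :
    WeakTendsto Pn P :=
  weakTendsto_of_map_inner_weakTendsto hA.span_eq_top H1 fun _ _ hproj =>
    eq_of_map_inner_eq_of_carleman hA hB hproj H2

theorem stmt13 (d : ℕ) (hd : 2 ≤ d)
    (Pn : ℕ → Measure (EuclideanSpace ℝ (Fin d)))
    (P : Measure (EuclideanSpace ℝ (Fin d)))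
    (hPn : ∀ n, IsProbabilityMeasure (Pn n)) [IsProbabilityMeasure P]
    (A : Set (EuclideanSpace ℝ (Fin d))) (hA : MeasurableSet A)
    (hAs : A ⊆ Metric.sphere (0 : EuclideanSpace ℝ (Fin d)) 1)
    (hApos : 0 < μH[(d : ℝ) - 1] A)
    (H1 : ∀ v ∈ A, WeakTendsto (fun n => (Pn n).map (fun x => ⟪v, x⟫_ℝ))
      (P.map (fun x => ⟪v, x⟫_ℝ)))
    (H2 : ∀ v ∈ A, (∀ m : ℕ,
        Integrable (fun t => |t| ^ m) (P.map (fun x => ⟪v, x⟫_ℝ))) ∧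
      Carleman (P.map (fun x => ⟪v, x⟫_ℝ))) :
    WeakTendsto Pn P := by
  have hA' := isProjectivelyZariskiDense_of_hausdorffMeasure_pos hAs hApos
  exact stmt13_general hA' hA'.span_eq_top Pn P H1 H2
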